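/- (Strict Jensen equality forces eigenstates) Let H be a complex Hilbert space, let T : H → H be a bounded self-adjoint operator, let ψ ∈ H with ‖ψ‖ = 1, and let Φ : ℝ → ℝ be strictly convex and continuous. If Φ(Re⟨ψ, Tψ⟩) = Re⟨ψ, Φ(T)ψ⟩, where Φ(T) denotes the continuous functional calculus, then ψ is an eigenvector of T: Tψ = (Re⟨ψ, Tψ⟩)·ψ. -/

import Mathlib

lemma aux_subgrad (Φ : ℝ → ℝ) (hconv : StrictConvexOn ℝ Set.univ Φ) (m : ℝ) :
    ∃ c : ℝ, ∀ x, x ≠ m → 0 < Φ x - Φ m - c * (x - m) := by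
  have hc := hconv.convexOn
  have hm : m ∈ interior (Set.univ : Set ℝ) := by simp
  have h1 : ∃ c : ℝ, ∀ x, 0 ≤ Φ x - Φ m - c * (x - m) := by
    refine ⟨derivWithin Φ (Set.Ioi m) m, fun x => ?_⟩
    rcases lt_trichotomy x m with h | h | h
    · have a := hc.slope_le_leftDeriv_of_mem_interior (Set.mem_univ x) hm h
      have b := hc.leftDeriv_le_rightDeriv_of_mem_interior hm
      have d := a.trans b
      rw [slope_def_field, div_le_iff₀ (by linarith)] at d
      linarith
    · simp [h]
    · have a := hc.rightDeriv_le_slope_of_mem_interior hm (Set.mem_univ x) h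
      rw [slope_def_field, le_div_iff₀ (by linarith)] at a
      linarith
  obtain ⟨c, hc⟩ := h1
  refine ⟨c, fun x hx => ?_⟩
  have h2 := hconv.2 (Set.mem_univ x) (Set.mem_univ m) hx (by norm_num : (0:ℝ) < 1/2)
    (by norm_num : (0:ℝ) < 1/2) (by norm_num)
  have h3 := hc ((1/2 : ℝ) • x + (1/2 : ℝ) • m)
  simp only [smul_eq_mul] at h2 h3
  nlinarith

lemma aux_bound (g : ℝ → ℝ) (hg : Continuous g) (m : ℝ) (hgm : g m = 0)
    (hpos : ∀ x, x ≠ m → 0 < g x) (K : Set ℝ) (hK : IsCompact K) (ε : ℝ) (hε : 0 < ε) :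
    ∃ C : ℝ, ∀ x ∈ K, (x - m) ^ 2 ≤ ε + C * g x := by
  have hne : ∀ x ∈ K ∩ {x | ε ≤ (x - m) ^ 2}, x ≠ m := by
    rintro x ⟨_, hx⟩ rfl
    simp at hx
    linarith
  have hK2 : IsCompact (K ∩ {x | ε ≤ (x - m) ^ 2}) :=
    hK.inter_right (isClosed_le (by fun_prop) (by fun_prop))
  have hc : ContinuousOn (fun x => (x - m) ^ 2 / g x) (K ∩ {x | ε ≤ (x - m) ^ 2}) :=
    ContinuousOn.div (by fun_prop) hg.continuousOn (fun x hx => (hpos x (hne x hx)).ne')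
  obtain ⟨C, hC⟩ := hK2.bddAbove_image hc
  have hn : ∀ x, 0 ≤ g x := fun x => by
    by_cases h : x = m
    · rw [h, hgm]
    · exact (hpos x h).le
  refine ⟨max C 0, fun x hx => ?_⟩
  by_cases h : ε ≤ (x - m) ^ 2
  · have h1 := hC ⟨x, ⟨hx, h⟩, rfl⟩
    have hp := hpos x (hne x ⟨hx, h⟩)
    rw [div_le_iff₀ hp] at h1
    have := mul_le_mul_of_nonneg_right (le_max_left C 0) hp.le
    linarith
  · have := mul_nonneg (le_max_right C 0) (hn x)
    linarith

/-- strict Jensen equality forces eigenstates: if `T` is a bounded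
self-adjoint operator on a complex Hilbert space, `ψ` a unit vector and `Φ : ℝ → ℝ`
strictly convex and continuous, then equality `Φ(⟨ψ, Tψ⟩) = ⟨ψ, Φ(T)ψ⟩` (with `Φ(T)`
the continuous functional calculus) implies that `ψ` is an eigenvector of `T` with
eigenvalue `⟨ψ, Tψ⟩`. -/
theorem stmt_13 {H : Type*} [NormedAddCommGroup H] [InnerProductSpace ℂ H]
    [CompleteSpace H] (T : H →L[ℂ] H) (hT : IsSelfAdjoint T)
    (ψ : H) (hψ : ‖ψ‖ = 1)
    (Φ : ℝ → ℝ) (hconv : StrictConvexOn ℝ Set.univ Φ) (hcont : Continuous Φ)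
    (heq : Φ ((inner ℂ ψ (T ψ) : ℂ).re) = (inner ℂ ψ ((cfc Φ T) ψ) : ℂ).re) :
    T ψ = (((inner ℂ ψ (T ψ) : ℂ).re : ℂ)) • ψ := by
  set m := (inner ℂ ψ (T ψ) : ℂ).re with hm
  obtain ⟨c, hc⟩ := aux_subgrad Φ hconv m
  have hψ2 : (inner ℂ ψ ψ : ℂ) = 1 := by
    rw [inner_self_eq_norm_sq_to_K, hψ]; simp
  have hT' : ∀ a b, (inner ℂ (T a) b : ℂ) = inner ℂ a (T b) := fun a b =>
    (ContinuousLinearMap.isSelfAdjoint_iff_isSymmetric.1 hT) a b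
  have key : ∀ ε : ℝ, 0 < ε → ‖T ψ - (m : ℂ) • ψ‖ ^ 2 ≤ ε := by
    intro ε hε
    obtain ⟨C, hC⟩ := aux_bound (fun x => Φ x - Φ m - c * (x - m)) (by fun_prop) m (by simp)
      hc (spectrum ℝ T) (spectrum.isCompact T) ε hε
    have h := cfc_mono (a := T) hC (by fun_prop) (by fun_prop)
    have e1 : cfc (fun x : ℝ => (x - m) ^ 2) T = (T - (algebraMap ℝ (H →L[ℂ] H) m)) ^ 2 := by
      rw [cfc_pow _ 2 T (by fun_prop), cfc_sub _ _ T (by fun_prop) (by fun_prop),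
        cfc_id' ℝ T, cfc_const m T]
    have e2 : cfc (fun x : ℝ => ε + C * (Φ x - Φ m - c * (x - m))) T
        = algebraMap ℝ (H →L[ℂ] H) ε + C • (cfc Φ T - algebraMap ℝ (H →L[ℂ] H) (Φ m)
          - c • (T - algebraMap ℝ (H →L[ℂ] H) m)) := by
      rw [cfc_add (a := T) (fun _ : ℝ => ε) _ (by fun_prop) (by fun_prop),
        cfc_const_mul C _ T (by fun_prop),
        cfc_sub _ _ T (by fun_prop) (by fun_prop), cfc_sub _ _ T (by fun_prop) (by fun_prop),
        cfc_const_mul c _ T (by fun_prop), cfc_sub _ _ T (by fun_prop) (by fun_prop),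
        cfc_id' ℝ T, cfc_const m T, cfc_const ε T, cfc_const (Φ m) T]
    rw [e1, e2, ContinuousLinearMap.le_def] at h
    have h2 := (Complex.le_def.1 (h.inner_nonneg_right ψ)).1
    have am : ∀ r : ℝ, (algebraMap ℝ (H →L[ℂ] H) r) ψ = (r : ℂ) • ψ := by
      intro r; simp [Algebra.algebraMap_eq_smul_one]
    have e3 : (inner ℂ ψ (((T - (algebraMap ℝ (H →L[ℂ] H) m)) ^ 2) ψ) : ℂ).re
        = ‖T ψ - (m : ℂ) • ψ‖ ^ 2 := by
      have hS : IsSelfAdjoint (T - algebraMap ℝ (H →L[ℂ] H) m) :=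
        hT.sub (IsSelfAdjoint.algebraMap _ (IsSelfAdjoint.all m))
      have := (ContinuousLinearMap.isSelfAdjoint_iff_isSymmetric.1 hS) ψ
        ((T - algebraMap ℝ (H →L[ℂ] H) m) ψ)
      rw [pow_two, ContinuousLinearMap.mul_apply]
      erw [← this]
      erw [inner_self_eq_norm_sq_to_K]
      simp only [ContinuousLinearMap.coe_coe, ContinuousLinearMap.sub_apply, am]
      norm_cast
    rw [ContinuousLinearMap.sub_apply, inner_sub_right, Complex.sub_re, e3] at h2
    have e4 : ∀ (r : ℝ) (v : H), (inner ℂ ψ (r • v) : ℂ).re = r * (inner ℂ ψ v : ℂ).re := by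
      intro r v
      rw [← Complex.coe_smul, inner_smul_right]; simp
    simp only [ContinuousLinearMap.add_apply, ContinuousLinearMap.sub_apply,
      ContinuousLinearMap.smul_apply, am, inner_add_right, inner_sub_right, e4, Complex.coe_smul,
      Complex.add_re, Complex.sub_re, hψ2, ← heq, ← hm, Complex.one_re, Complex.zero_re] at h2
    simp only [Complex.coe_smul]
    linarith
  have h0 : ‖T ψ - (m : ℂ) • ψ‖ ^ 2 ≤ 0 := le_of_forall_pos_le_add (by simpa using key)
  have h1 : ‖T ψ - (m : ℂ) • ψ‖ = 0 := by
    have := sq_nonneg ‖T ψ - (m : ℂ) • ψ‖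
    exact pow_eq_zero_iff (two_ne_zero) |>.1 (le_antisymm h0 this)
  exact sub_eq_zero.1 (norm_eq_zero.1 h1)
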